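/- In the setting of Theorem 8, suppose additionally that |d(x)| ≤ δ(x) for all x ∈ ℝⁿ, where δ : ℝⁿ → ℝ₊ is a known continuous function with δ(x)/|x| → 0 as |x| → 0, and that Q(0) = 0 with |Q(x)|/|x| → 0 as |x| → 0. Let 𝒲 := {x : ℓ(x) + g(x, δ(x)) < 0}. Then the origin is an asymptotically stable equilibrium of the closed-loop system x⁺ = Ψ x + Ξ Q(x) + E d(x), and every sublevel set ℛ_γ := {x : V(x) ≤ γ} contained in 𝒲 ∪ {0} is positively invariant, with every solution starting in ℛ_γ converging to 0. (Theorem 9: asymptotic stability under state-dependent disturbance bounds.) -/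

import Mathlib

open Matrix Filter Topology

noncomputable def euclNorm {ι : Type*} [Fintype ι] (v : ι → ℝ) : ℝ :=
  Real.sqrt (∑ i, v i ^ 2)

noncomputable def spec2Norm {ι κ : Type*} [Fintype ι] [Fintype κ]
    (M : Matrix ι κ ℝ) : ℝ :=
  sSup ((fun v => euclNorm (M *ᵥ v)) '' {v | euclNorm v ≤ 1})

def LoewnerLE {ι : Type*} [Fintype ι] (X Y : Matrix ι ι ℝ) : Prop :=
  (Y - X).PosSemidef

def NegDef {ι : Type*} [Fintype ι] (M : Matrix ι ι ℝ) : Prop :=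
  (-M).PosDef

/-- The data-based bound `ℓ(x)` of inequality (34). -/
noncomputable def ellFun {n s s' p T : ℕ}
    (X₁ : Matrix (Fin n) (Fin T) ℝ) (E : Matrix (Fin n) (Fin s) ℝ)
    (Δ : Matrix (Fin s) (Fin s') ℝ) (P₁ Ω : Matrix (Fin n) (Fin n) ℝ)
    (G₁ : Matrix (Fin T) (Fin n) ℝ) (G₂ : Matrix (Fin T) (Fin p) ℝ)
    (Q : (Fin n → ℝ) → Fin p → ℝ) (x : Fin n → ℝ) : ℝ :=
  - (x ⬝ᵥ ((P₁⁻¹ * Ω * P₁⁻¹) *ᵥ x))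
  + (((2:ℝ) • ((X₁ * G₁) *ᵥ x) + (X₁ * G₂) *ᵥ Q x) ⬝ᵥ (P₁⁻¹ *ᵥ ((X₁ * G₂) *ᵥ Q x)))
  + spec2Norm Δ
      * euclNorm (((2:ℝ) • ((X₁ * G₁) *ᵥ x) + (X₁ * G₂) *ᵥ Q x) ᵥ* (P₁⁻¹ * E))
      * euclNorm (G₂ *ᵥ Q x)
  + spec2Norm Δ * euclNorm ((2:ℝ) • (G₁ *ᵥ x) + G₂ *ᵥ Q x)
      * euclNorm ((Eᵀ * P₁⁻¹ * X₁ * G₂) *ᵥ Q x)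
  + spec2Norm Δ ^ 2 * spec2Norm (Eᵀ * P₁⁻¹ * E)
      * euclNorm ((2:ℝ) • (G₁ *ᵥ x) + G₂ *ᵥ Q x) * euclNorm (G₂ *ᵥ Q x)

/-- The disturbance term `g(x, δ) = r₁(x)δ + r₂(x)δ + r₃δ²` of (35)-(36). -/
noncomputable def gFun {n s s' p T : ℕ}
    (X₁ : Matrix (Fin n) (Fin T) ℝ) (E : Matrix (Fin n) (Fin s) ℝ)
    (Δ : Matrix (Fin s) (Fin s') ℝ) (P₁ : Matrix (Fin n) (Fin n) ℝ)
    (G₁ : Matrix (Fin T) (Fin n) ℝ) (G₂ : Matrix (Fin T) (Fin p) ℝ)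
    (Q : (Fin n → ℝ) → Fin p → ℝ) (δ : ℝ) (x : Fin n → ℝ) : ℝ :=
  2 * euclNorm (((X₁ * G₁) *ᵥ x + (X₁ * G₂) *ᵥ Q x) ᵥ* (P₁⁻¹ * E)) * δ
  + 2 * spec2Norm Δ * spec2Norm (Eᵀ * P₁⁻¹ * E)
      * euclNorm (G₁ *ᵥ x + G₂ *ᵥ Q x) * δ
  + spec2Norm (Eᵀ * P₁⁻¹ * E) * δ ^ 2


section EuclideanNorm

variable {ι κ : Type*} [Fintype ι] [Fintype κ]

lemma euclNorm_eq_norm_toLp (v : ι → ℝ) : euclNorm v = ‖WithLp.toLp 2 v‖ := by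
  simp [euclNorm, EuclideanSpace.norm_eq]

lemma euclNorm_nonneg (v : ι → ℝ) : 0 ≤ euclNorm v := Real.sqrt_nonneg _

lemma euclNorm_eq_zero {v : ι → ℝ} : euclNorm v = 0 ↔ v = 0 := by
  simp [euclNorm_eq_norm_toLp]

lemma euclNorm_add_le (v w : ι → ℝ) : euclNorm (v + w) ≤ euclNorm v + euclNorm w := by
  simpa only [euclNorm_eq_norm_toLp, WithLp.toLp_add] using norm_add_le _ _

lemma euclNorm_smul (c : ℝ) (v : ι → ℝ) : euclNorm (c • v) = |c| * euclNorm v := by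
  simp only [euclNorm_eq_norm_toLp, WithLp.toLp_smul, norm_smul, Real.norm_eq_abs]

lemma abs_dotProduct_le_euclNorm (v w : ι → ℝ) : |v ⬝ᵥ w| ≤ euclNorm v * euclNorm w := by
  have h := abs_real_inner_le_norm (WithLp.toLp 2 w) (WithLp.toLp 2 v)
  rw [EuclideanSpace.inner_toLp_toLp] at h
  simpa [euclNorm_eq_norm_toLp, mul_comm] using h

lemma norm_le_euclNorm (v : ι → ℝ) : ‖v‖ ≤ euclNorm v := by
  rw [euclNorm_eq_norm_toLp]
  exact (pi_norm_le_iff_of_nonneg (norm_nonneg _)).2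
    fun i => PiLp.norm_apply_le (WithLp.toLp 2 v) i

lemma continuous_euclNorm : Continuous (euclNorm : (ι → ℝ) → ℝ) := by
  unfold euclNorm
  fun_prop

lemma isCompact_euclNorm_eq_one : IsCompact {v : ι → ℝ | euclNorm v = 1} := by
  refine Metric.isCompact_of_isClosed_isBounded
    (isClosed_eq continuous_euclNorm continuous_const) ?_
  refine isBounded_iff_forall_norm_le.2 ⟨1, fun v hv => ?_⟩
  exact (norm_le_euclNorm v).trans_eq hv

lemma isCompact_euclNorm_le_one : IsCompact {v : ι → ℝ | euclNorm v ≤ 1} := by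
  refine Metric.isCompact_of_isClosed_isBounded
    (isClosed_le continuous_euclNorm continuous_const) ?_
  exact isBounded_iff_forall_norm_le.2 ⟨1, fun v hv => (norm_le_euclNorm v).trans hv⟩

lemma euclNorm_inv_smul_self {v : ι → ℝ} (hv : v ≠ 0) :
    euclNorm ((euclNorm v)⁻¹ • v) = 1 := by
  rw [euclNorm_smul, abs_of_nonneg (inv_nonneg.2 (euclNorm_nonneg v))]
  exact inv_mul_cancel₀ (mt euclNorm_eq_zero.1 hv)

lemma euclNorm_mulVec_le (M : Matrix ι κ ℝ) (v : κ → ℝ) :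
    euclNorm (M *ᵥ v) ≤ spec2Norm M * euclNorm v := by
  rcases eq_or_ne v 0 with rfl | hv
  · simp [euclNorm]
  have hbdd : BddAbove ((fun v => euclNorm (M *ᵥ v)) '' {v | euclNorm v ≤ 1}) :=
    (isCompact_euclNorm_le_one.image
      (continuous_euclNorm.comp (by fun_prop : Continuous fun v => M *ᵥ v))).bddAbove
  have hpos : 0 < euclNorm v := (euclNorm_nonneg v).lt_of_ne' (mt euclNorm_eq_zero.1 hv)
  have h : euclNorm (M *ᵥ ((euclNorm v)⁻¹ • v)) ≤ spec2Norm M :=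
    le_csSup hbdd ⟨_, (euclNorm_inv_smul_self hv).le, rfl⟩
  rw [mulVec_smul, euclNorm_smul, abs_of_pos (inv_pos.2 hpos), inv_mul_le_iff₀ hpos] at h
  linarith

lemma spec2Norm_nonneg (M : Matrix ι κ ℝ) : 0 ≤ spec2Norm M := by
  apply Real.sSup_nonneg
  rintro _ ⟨v, -, rfl⟩
  exact euclNorm_nonneg _

lemma abs_dotProduct_mulVec_le (M : Matrix ι κ ℝ) (v : ι → ℝ) (w : κ → ℝ) :
    |v ⬝ᵥ M *ᵥ w| ≤ spec2Norm M * euclNorm v * euclNorm w := by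
  refine (abs_dotProduct_le_euclNorm _ _).trans ?_
  have := mul_le_mul_of_nonneg_left (euclNorm_mulVec_le M w) (euclNorm_nonneg v)
  linarith

/-- A positive definite quadratic form dominates a positive multiple of the squared norm. -/
lemma Matrix.PosDef.exists_pos_mul_euclNorm_sq_le {M : Matrix ι ι ℝ} (hM : M.PosDef) :
    ∃ c > 0, ∀ v, c * euclNorm v ^ 2 ≤ v ⬝ᵥ M *ᵥ v := by
  have hpos : ∀ v : ι → ℝ, v ≠ 0 → 0 < v ⬝ᵥ M *ᵥ v := fun v hv => by
    simpa using hM.dotProduct_mulVec_pos hv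
  have hcont : Continuous fun v : ι → ℝ => v ⬝ᵥ M *ᵥ v := by fun_prop
  obtain ⟨c, hc, hle⟩ : ∃ c > 0, ∀ v : ι → ℝ, euclNorm v = 1 → c ≤ v ⬝ᵥ M *ᵥ v := by
    rcases Set.eq_empty_or_nonempty {v : ι → ℝ | euclNorm v = 1} with h | h
    · exact ⟨1, one_pos, fun v hv => (Set.eq_empty_iff_forall_notMem.1 h v hv).elim⟩
    · obtain ⟨w, hw, hmin⟩ := isCompact_euclNorm_eq_one.exists_isMinOn h hcont.continuousOn
      refine ⟨w ⬝ᵥ M *ᵥ w, hpos w ?_, fun v hv => hmin hv⟩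
      rintro rfl
      simp [euclNorm] at hw
  refine ⟨c, hc, fun v => ?_⟩
  rcases eq_or_ne v 0 with rfl | hv
  · simp [euclNorm]
  have hn : 0 < euclNorm v := (euclNorm_nonneg v).lt_of_ne' (mt euclNorm_eq_zero.1 hv)
  have h := hle _ (euclNorm_inv_smul_self hv)
  rw [mulVec_smul, dotProduct_smul, smul_dotProduct, smul_eq_mul, smul_eq_mul, ← mul_assoc,
    ← mul_inv, ← sq, le_inv_mul_iff₀ (by positivity)] at h
  linarith

end EuclideanNorm

section Asymptotics

open Asymptotics

variable {α ι κ : Type*} [Fintype ι] [Fintype κ] {l : Filter α} {g : α → ℝ}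

lemma isBigO_euclNorm_add {u v : α → ι → ℝ} (hu : (fun x => euclNorm (u x)) =O[l] g)
    (hv : (fun x => euclNorm (v x)) =O[l] g) : (fun x => euclNorm (u x + v x)) =O[l] g := by
  refine (IsBigO.of_norm_le fun x => ?_).trans (hu.add hv)
  rw [Real.norm_of_nonneg (euclNorm_nonneg _)]
  exact euclNorm_add_le _ _

lemma isBigO_euclNorm_mulVec (M : Matrix ι κ ℝ) (u : α → κ → ℝ) :
    (fun x => euclNorm (M *ᵥ u x)) =O[l] fun x => euclNorm (u x) := by
  refine IsBigO.of_bound (spec2Norm M) (Eventually.of_forall fun x => ?_)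
  rw [Real.norm_of_nonneg (euclNorm_nonneg _), Real.norm_of_nonneg (euclNorm_nonneg _)]
  exact euclNorm_mulVec_le M _

lemma isBigO_euclNorm_vecMul (M : Matrix κ ι ℝ) (u : α → κ → ℝ) :
    (fun x => euclNorm (u x ᵥ* M)) =O[l] fun x => euclNorm (u x) := by
  simpa only [mulVec_transpose] using isBigO_euclNorm_mulVec Mᵀ u

lemma isBigO_euclNorm_smul (c : ℝ) (u : α → ι → ℝ) :
    (fun x => euclNorm (c • u x)) =O[l] fun x => euclNorm (u x) := by
  simp only [euclNorm_smul]
  exact (isBigO_refl _ _).const_mul_left _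

lemma isBigO_dotProduct (u v : α → ι → ℝ) :
    (fun x => u x ⬝ᵥ v x) =O[l] fun x => euclNorm (u x) * euclNorm (v x) :=
  IsBigO.of_norm_le fun _ => abs_dotProduct_le_euclNorm _ _

/-- A function that is `o(|x|)` at the punctured origin is `o(|x|)` at the origin as soon as it
vanishes there. -/
lemma isLittleO_euclNorm_of_tendsto_div {h : (ι → ℝ) → ℝ} (h0 : h 0 = 0)
    (hlim : Tendsto (fun x => h x / euclNorm x) (𝓝[{x | x ≠ 0}] 0) (𝓝 0)) :
    h =o[𝓝 0] fun x => euclNorm x := by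
  have hne : h =o[𝓝[≠] 0] fun x => euclNorm x := by
    refine (isLittleO_iff_tendsto' ?_).2 hlim
    filter_upwards [self_mem_nhdsWithin] with x hx hx0
    exact (hx (euclNorm_eq_zero.1 hx0)).elim
  simpa [Set.insert_eq, Set.union_compl_self] using hne.insert h0

end Asymptotics

section Lyapunov

open Asymptotics

variable {n p s s' T : ℕ} {X₁ : Matrix (Fin n) (Fin T) ℝ} {E : Matrix (Fin n) (Fin s) ℝ}
  {D₀ : Matrix (Fin s) (Fin T) ℝ} {Δ : Matrix (Fin s) (Fin s') ℝ}
  {P₁ Ω : Matrix (Fin n) (Fin n) ℝ} {G₁ : Matrix (Fin T) (Fin n) ℝ}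
  {G₂ : Matrix (Fin T) (Fin p) ℝ} {Q : (Fin n → ℝ) → Fin p → ℝ}

lemma dotProduct_mulVec_mulVec_eq_vecMul {ι κ ν : Type*} [Fintype ι] [Fintype κ] [Fintype ν]
    (R : Matrix ι κ ℝ) (F : Matrix κ ν ℝ) (v : ι → ℝ) (w : ν → ℝ) :
    v ⬝ᵥ R *ᵥ (F *ᵥ w) = (v ᵥ* (R * F)) ⬝ᵥ w := by
  rw [mulVec_mulVec, dotProduct_mulVec]

lemma mulVec_dotProduct {ι κ : Type*} [Fintype ι] [Fintype κ]
    (F : Matrix ι κ ℝ) (v : κ → ℝ) (w : ι → ℝ) : (F *ᵥ v) ⬝ᵥ w = v ⬝ᵥ Fᵀ *ᵥ w := by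
  rw [dotProduct_mulVec, vecMul_transpose]

/-- The value of `V` along the closed loop, bounded by the nominal part, `ℓ` and `g`. -/
lemma closedLoop_quadForm_le (hP : (P₁⁻¹).IsSymm) (hD : spec2Norm D₀ ≤ spec2Norm Δ)
    (x : Fin n → ℝ) {d : Fin s → ℝ} {δ : ℝ} (hd : euclNorm d ≤ δ) :
    (((X₁ - E * D₀) * G₁) *ᵥ x + ((X₁ - E * D₀) * G₂) *ᵥ Q x + E *ᵥ d) ⬝ᵥ P₁⁻¹ *ᵥ
        (((X₁ - E * D₀) * G₁) *ᵥ x + ((X₁ - E * D₀) * G₂) *ᵥ Q x + E *ᵥ d) ≤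
      (((X₁ - E * D₀) * G₁) *ᵥ x) ⬝ᵥ P₁⁻¹ *ᵥ (((X₁ - E * D₀) * G₁) *ᵥ x)
        + x ⬝ᵥ (P₁⁻¹ * Ω * P₁⁻¹) *ᵥ x
        + (ellFun X₁ E Δ P₁ Ω G₁ G₂ Q x + gFun X₁ E Δ P₁ G₁ G₂ Q δ x) := by
  have hDv (v : Fin T → ℝ) : euclNorm (D₀ *ᵥ v) ≤ spec2Norm Δ * euclNorm v :=
    (euclNorm_mulVec_le D₀ v).trans (mul_le_mul_of_nonneg_right hD (euclNorm_nonneg v))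
  have hcross (v : Fin n → ℝ) (m : Fin s → ℝ) {c : ℝ} (hm : euclNorm m ≤ c) :
      |v ⬝ᵥ P₁⁻¹ *ᵥ (E *ᵥ m)| ≤ euclNorm (v ᵥ* (P₁⁻¹ * E)) * c := by
    rw [dotProduct_mulVec_mulVec_eq_vecMul]
    exact (abs_dotProduct_le_euclNorm _ _).trans
      (mul_le_mul_of_nonneg_left hm (euclNorm_nonneg _))
  have hquad (k m : Fin s → ℝ) {b c : ℝ} (hk : euclNorm k ≤ b) (hm : euclNorm m ≤ c) :
      |(E *ᵥ k) ⬝ᵥ P₁⁻¹ *ᵥ (E *ᵥ m)| ≤ spec2Norm (Eᵀ * P₁⁻¹ * E) * (b * c) := by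
    rw [mulVec_dotProduct, mulVec_mulVec, mulVec_mulVec]
    refine (abs_dotProduct_mulVec_le _ _ _).trans ?_
    rw [mul_assoc]
    exact mul_le_mul_of_nonneg_left
      (mul_le_mul hk hm (euclNorm_nonneg _) ((euclNorm_nonneg _).trans hk)) (spec2Norm_nonneg _)
  have hb (k : Fin s → ℝ) {c : ℝ} (hk : euclNorm k ≤ c) :
      |(E *ᵥ k) ⬝ᵥ P₁⁻¹ *ᵥ ((X₁ * G₂) *ᵥ Q x)| ≤
        c * euclNorm ((Eᵀ * P₁⁻¹ * X₁ * G₂) *ᵥ Q x) := by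
    rw [mulVec_dotProduct, mulVec_mulVec, mulVec_mulVec, ← Matrix.mul_assoc]
    exact (abs_dotProduct_le_euclNorm _ _).trans
      (mul_le_mul_of_nonneg_right hk (euclNorm_nonneg _))
  have hsymm (v w : Fin n → ℝ) : v ⬝ᵥ P₁⁻¹ *ᵥ w = w ⬝ᵥ P₁⁻¹ *ᵥ v := by
    rw [dotProduct_comm, mulVec_dotProduct, hP.eq]
  have hG₁ : ((X₁ - E * D₀) * G₁) *ᵥ x = (X₁ * G₁) *ᵥ x - E *ᵥ (D₀ *ᵥ (G₁ *ᵥ x)) := by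
    simp [Matrix.sub_mul, sub_mulVec, Matrix.mul_assoc]
  have hG₂ : ((X₁ - E * D₀) * G₂) *ᵥ Q x = (X₁ * G₂) *ᵥ Q x - E *ᵥ (D₀ *ᵥ (G₂ *ᵥ Q x)) := by
    simp [Matrix.sub_mul, sub_mulVec, Matrix.mul_assoc]
  have h₁ := hcross ((2:ℝ) • ((X₁ * G₁) *ᵥ x) + (X₁ * G₂) *ᵥ Q x) _ (hDv (G₂ *ᵥ Q x))
  have h₂ := hb _ (hDv ((2:ℝ) • (G₁ *ᵥ x) + G₂ *ᵥ Q x))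
  have h₃ := hquad _ _ (hDv ((2:ℝ) • (G₁ *ᵥ x) + G₂ *ᵥ Q x)) (hDv (G₂ *ᵥ Q x))
  have h₄ := hcross ((X₁ * G₁) *ᵥ x + (X₁ * G₂) *ᵥ Q x) d hd
  have h₅ := hquad _ d (hDv (G₁ *ᵥ x + G₂ *ᵥ Q x)) hd
  have h₆ := hquad d d hd hd
  rw [hG₁, hG₂, ellFun, gFun]
  generalize euclNorm (((2:ℝ) • ((X₁ * G₁) *ᵥ x) + (X₁ * G₂) *ᵥ Q x) ᵥ* (P₁⁻¹ * E)) = N₁ at *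
  generalize euclNorm (((X₁ * G₁) *ᵥ x + (X₁ * G₂) *ᵥ Q x) ᵥ* (P₁⁻¹ * E)) = N₂ at *
  generalize euclNorm ((2:ℝ) • (G₁ *ᵥ x) + G₂ *ᵥ Q x) = N₃ at *
  generalize euclNorm (G₁ *ᵥ x + G₂ *ᵥ Q x) = N₄ at *
  generalize (X₁ * G₁) *ᵥ x = a at *
  generalize (X₁ * G₂) *ᵥ Q x = b at *
  simp only [mulVec_add, mulVec_smul] at h₁ h₂ h₃ h₄ h₅ h₆
  generalize E *ᵥ (D₀ *ᵥ (G₁ *ᵥ x)) = e₁ at *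
  generalize E *ᵥ (D₀ *ᵥ (G₂ *ᵥ Q x)) = e₂ at *
  generalize E *ᵥ d = e at *
  simp only [mulVec_add, mulVec_sub, add_dotProduct, dotProduct_add,
    sub_dotProduct, dotProduct_sub, smul_dotProduct, smul_eq_mul] at h₁ h₂ h₃ h₄ h₅ h₆ ⊢
  linarith [(abs_le.1 h₁).1, (abs_le.1 h₂).1, (abs_le.1 h₃).2, (abs_le.1 h₄).2, (abs_le.1 h₅).1,
    (abs_le.1 h₆).2, hsymm b a, hsymm e₁ b, hsymm e₂ a, hsymm e a, hsymm e b, hsymm e e₁,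
    hsymm e e₂, hsymm e₂ e₁]

/-- Up to its quadratic part, `ℓ(x) + g(x, δ(x))` is `o(|x|²)` at the origin. -/
lemma ellFun_add_gFun_isLittleO {δ : (Fin n → ℝ) → ℝ}
    (hQ : (fun x => euclNorm (Q x)) =o[𝓝 0] fun x : Fin n → ℝ => euclNorm x)
    (hδ : δ =o[𝓝 0] fun x : Fin n → ℝ => euclNorm x) :
    (fun x => ellFun X₁ E Δ P₁ Ω G₁ G₂ Q x + gFun X₁ E Δ P₁ G₁ G₂ Q (δ x) x
      + x ⬝ᵥ (P₁⁻¹ * Ω * P₁⁻¹) *ᵥ x) =o[𝓝 0] fun x : Fin n → ℝ => euclNorm x * euclNorm x := by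
  have hlin {q : ℕ} (A : Matrix (Fin q) (Fin n) ℝ) :
      (fun x => euclNorm (A *ᵥ x)) =O[𝓝 0] fun x : Fin n → ℝ => euclNorm x :=
    isBigO_euclNorm_mulVec A _
  have hlin2 {q : ℕ} (A : Matrix (Fin q) (Fin n) ℝ) :
      (fun x => euclNorm ((2:ℝ) • (A *ᵥ x))) =O[𝓝 0] fun x : Fin n → ℝ => euclNorm x :=
    (isBigO_euclNorm_smul 2 _).trans (hlin A)
  have hnl {q : ℕ} (A : Matrix (Fin q) (Fin p) ℝ) :
      (fun x => euclNorm (A *ᵥ Q x)) =o[𝓝 0] fun x : Fin n → ℝ => euclNorm x :=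
    (isBigO_euclNorm_mulVec A _).trans_isLittleO hQ
  have hsum {q : ℕ} (A : Matrix (Fin q) (Fin n) ℝ) (B : Matrix (Fin q) (Fin p) ℝ) :=
    isBigO_euclNorm_add (hlin A) (hnl B).isBigO
  have hsum2 {q : ℕ} (A : Matrix (Fin q) (Fin n) ℝ) (B : Matrix (Fin q) (Fin p) ℝ) :=
    isBigO_euclNorm_add (hlin2 A) (hnl B).isBigO
  have t₁ := (isBigO_dotProduct (l := 𝓝 0)
    (fun x => (2:ℝ) • ((X₁ * G₁) *ᵥ x) + (X₁ * G₂) *ᵥ Q x)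
    (fun x => P₁⁻¹ *ᵥ ((X₁ * G₂) *ᵥ Q x))).trans_isLittleO
    ((hsum2 (X₁ * G₁) (X₁ * G₂)).mul_isLittleO
      ((isBigO_euclNorm_mulVec P₁⁻¹ _).trans_isLittleO (hnl (X₁ * G₂))))
  have t₂ := ((((isBigO_euclNorm_vecMul (P₁⁻¹ * E) _).trans
    (hsum2 (X₁ * G₁) (X₁ * G₂))).const_mul_left (spec2Norm Δ)).mul_isLittleO (hnl G₂))
  have t₃ := ((hsum2 G₁ G₂).const_mul_left (spec2Norm Δ)).mul_isLittleO
    (hnl (Eᵀ * P₁⁻¹ * X₁ * G₂))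
  have t₄ := ((hsum2 G₁ G₂).const_mul_left
    (spec2Norm Δ ^ 2 * spec2Norm (Eᵀ * P₁⁻¹ * E))).mul_isLittleO (hnl G₂)
  have t₅ := ((((isBigO_euclNorm_vecMul (P₁⁻¹ * E) _).trans
    (hsum (X₁ * G₁) (X₁ * G₂))).const_mul_left 2).mul_isLittleO hδ)
  have t₆ := ((hsum G₁ G₂).const_mul_left
    (2 * spec2Norm Δ * spec2Norm (Eᵀ * P₁⁻¹ * E))).mul_isLittleO hδ
  have t₇ := (hδ.mul hδ).const_mul_left (spec2Norm (Eᵀ * P₁⁻¹ * E))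
  refine (((t₁.add t₂).add t₃).add t₄ |>.add ((t₅.add t₆).add t₇)).congr_left fun x => ?_
  rw [ellFun, gFun]
  ring

/-- `ℓ(x) + g(x, δ(x)) < 0` on a punctured neighbourhood of the origin. -/
lemma exists_ball_ellFun_add_gFun_neg (hΩ : (P₁⁻¹ * Ω * P₁⁻¹).PosDef) {δ : (Fin n → ℝ) → ℝ}
    (hQ : (fun x => euclNorm (Q x)) =o[𝓝 0] fun x : Fin n → ℝ => euclNorm x)
    (hδ : δ =o[𝓝 0] fun x : Fin n → ℝ => euclNorm x) :
    ∃ r > 0, ∀ x : Fin n → ℝ, euclNorm x < r →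
      ellFun X₁ E Δ P₁ Ω G₁ G₂ Q x + gFun X₁ E Δ P₁ G₁ G₂ Q (δ x) x < 0 ∨ x = 0 := by
  obtain ⟨c, hc, hcle⟩ := hΩ.exists_pos_mul_euclNorm_sq_le
  have hev := (ellFun_add_gFun_isLittleO (X₁ := X₁) (E := E) (Δ := Δ) (P₁ := P₁) (Ω := Ω)
    (G₁ := G₁) (G₂ := G₂) hQ hδ).bound (half_pos hc)
  obtain ⟨r, hr, hball⟩ := Metric.eventually_nhds_iff.1 hev
  refine ⟨r, hr, fun x hx => or_iff_not_imp_right.2 fun hx0 => ?_⟩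
  have hpos : 0 < euclNorm x := (euclNorm_nonneg x).lt_of_ne' (mt euclNorm_eq_zero.1 hx0)
  have h := (le_abs_self _).trans
    (hball (by simpa using (norm_le_euclNorm x).trans_lt hx : dist x 0 < r))
  rw [Real.norm_of_nonneg (mul_self_nonneg _)] at h
  nlinarith [hcle x, mul_pos hc (mul_pos hpos hpos)]

/-- A trajectory along which a nonnegative function drops by at least `c |x|²` at every step
converges to the origin. -/
lemma tendsto_zero_of_quadratic_decrease {ι : Type*} [Fintype ι] {V : (ι → ℝ) → ℝ}
    (hV : ∀ x, 0 ≤ V x) {c : ℝ} (hc : 0 < c) {x : ℕ → ι → ℝ}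
    (hdec : ∀ t, V (x (t + 1)) ≤ V (x t) - c * euclNorm (x t) ^ 2) :
    Tendsto x atTop (𝓝 0) := by
  have hanti : Antitone fun t => V (x t) := antitone_nat_of_succ_le fun t =>
    (hdec t).trans (sub_le_self _ (by positivity))
  have hlim := tendsto_atTop_ciInf hanti ⟨0, by rintro _ ⟨t, rfl⟩; exact hV _⟩
  have hdiff : Tendsto (fun t => (V (x t) - V (x (t + 1))) / c) atTop (𝓝 0) := by
    simpa using (hlim.sub (hlim.comp (tendsto_add_atTop_nat 1))).div_const c
  have hsq : Tendsto (fun t => euclNorm (x t) ^ 2) atTop (𝓝 0) := by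
    refine squeeze_zero (fun t => sq_nonneg _) (fun t => ?_) hdiff
    rw [le_div_iff₀ hc]
    linarith [hdec t]
  have hnorm : Tendsto (fun t => euclNorm (x t)) atTop (𝓝 0) := by
    simpa [Real.sqrt_sq (euclNorm_nonneg _)] using hsq.sqrt
  exact squeeze_zero_norm (fun t => norm_le_euclNorm (x t)) hnorm

lemma Matrix.PosDef.inv_mul_mul_inv {ι : Type*} [Fintype ι] [DecidableEq ι] {P M : Matrix ι ι ℝ}
    (hP : P.PosDef) (hM : M.PosDef) : (P⁻¹ * M * P⁻¹).PosDef := by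
  have h := hM.conjTranspose_mul_mul_same
    (Matrix.mulVec_injective_of_isUnit hP.inv.isUnit)
  rwa [hP.inv.isHermitian.eq] at h

/-- The nominal quadratic form, rewritten through the defect of the Lyapunov inequality. -/
lemma nominal_quadForm_eq {ι κ : Type*} [Fintype ι] [Fintype κ] [DecidableEq ι]
    {P W : Matrix ι ι ℝ} (hP : P.PosDef) (A : Matrix ι κ ℝ) (Y : Matrix κ ι ℝ) (x : ι → ℝ) :
    ((A * (Y * P⁻¹)) *ᵥ x) ⬝ᵥ P⁻¹ *ᵥ ((A * (Y * P⁻¹)) *ᵥ x) + x ⬝ᵥ (P⁻¹ * W * P⁻¹) *ᵥ x =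
      x ⬝ᵥ P⁻¹ *ᵥ x
        - x ⬝ᵥ (P⁻¹ * (-(Yᵀ * Aᵀ * P⁻¹ * (A * Y) - P + W)) * P⁻¹) *ᵥ x := by
  have hT : (P⁻¹)ᵀ = P⁻¹ := by simpa [IsHermitian] using hP.inv.isHermitian
  have hPP : P⁻¹ * P * P⁻¹ = P⁻¹ := by
    rw [Matrix.nonsing_inv_mul _ ((Matrix.isUnit_iff_isUnit_det _).1 hP.isUnit), Matrix.one_mul]
  have hM : P⁻¹ * (-(Yᵀ * Aᵀ * P⁻¹ * (A * Y) - P + W)) * P⁻¹ =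
      P⁻¹ - P⁻¹ * W * P⁻¹ - (A * (Y * P⁻¹))ᵀ * (P⁻¹ * (A * (Y * P⁻¹))) := by
    conv_rhs => enter [1, 1]; rw [← hPP]
    rw [transpose_mul, transpose_mul, hT]
    simp only [Matrix.mul_neg, Matrix.neg_mul, Matrix.mul_add, Matrix.add_mul, Matrix.mul_sub,
      Matrix.sub_mul, Matrix.mul_assoc]
    abel
  rw [hM, mulVec_dotProduct, mulVec_mulVec, mulVec_mulVec, sub_mulVec, sub_mulVec,
    dotProduct_sub, dotProduct_sub, Matrix.mul_assoc _ᵀ]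
  ring

end Lyapunov

/-- Theorem 9 (asymptotic stability under state-dependent disturbance bounds). -/
theorem asymptotic_stability_state_dependent_bound
    {n p s s' T : ℕ}
    (X₁ : Matrix (Fin n) (Fin T) ℝ) (E : Matrix (Fin n) (Fin s) ℝ)
    (D₀ : Matrix (Fin s) (Fin T) ℝ) (Δ : Matrix (Fin s) (Fin s') ℝ)
    (Q : (Fin n → ℝ) → Fin p → ℝ)
    (hQ0 : Q 0 = 0)
    (hQlim : Filter.Tendsto (fun x : Fin n → ℝ => euclNorm (Q x) / euclNorm x)
      (nhdsWithin 0 {x | x ≠ 0}) (nhds 0))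
    -- the neglected nonlinearity and its state-dependent bound:
    (d : (Fin n → ℝ) → Fin s → ℝ)
    (δfun : (Fin n → ℝ) → ℝ) (hδcont : Continuous δfun)
    (hδnonneg : ∀ x, 0 ≤ δfun x)
    (hδlim : Filter.Tendsto (fun x : Fin n → ℝ => δfun x / euclNorm x)
      (nhdsWithin 0 {x | x ≠ 0}) (nhds 0))
    (hd : ∀ x, euclNorm (d x) ≤ δfun x)
    (hD₀norm : spec2Norm D₀ ≤ spec2Norm Δ)
    (P₁ : Matrix (Fin n) (Fin n) ℝ) (hP₁symm : P₁.IsSymm) (hP₁ : P₁.PosDef)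
    (Ω : Matrix (Fin n) (Fin n) ℝ) (hΩsymm : Ω.IsSymm) (hΩ : Ω.PosDef)
    (Y₁ : Matrix (Fin T) (Fin n) ℝ) (G₂ : Matrix (Fin T) (Fin p) ℝ)
    (hrob : NegDef (Y₁ᵀ * (X₁ - E * D₀)ᵀ * P₁⁻¹ * ((X₁ - E * D₀) * Y₁) - P₁ + Ω))
    (G₁ : Matrix (Fin T) (Fin n) ℝ) (hG₁ : G₁ = Y₁ * P₁⁻¹)
    (Ψ : Matrix (Fin n) (Fin n) ℝ) (hΨ : Ψ = (X₁ - E * D₀) * G₁)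
    (Ξ : Matrix (Fin n) (Fin p) ℝ) (hΞ : Ξ = (X₁ - E * D₀) * G₂)
    (V : (Fin n → ℝ) → ℝ) (hV : ∀ x, V x = x ⬝ᵥ (P₁⁻¹ *ᵥ x))
    -- the closed-loop map:
    (f : (Fin n → ℝ) → Fin n → ℝ)
    (hf : ∀ x, f x = Ψ *ᵥ x + Ξ *ᵥ Q x + E *ᵥ d x) :
    -- the origin is an asymptotically stable equilibrium:
    f 0 = 0 ∧
    (∀ ε > (0:ℝ), ∃ δ > (0:ℝ), ∀ x : ℕ → Fin n → ℝ,
      (∀ t, x (t + 1) = f (x t)) → euclNorm (x 0) ≤ δ →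
      ∀ t, euclNorm (x t) ≤ ε) ∧
    (∃ r > (0:ℝ), ∀ x : ℕ → Fin n → ℝ,
      (∀ t, x (t + 1) = f (x t)) → euclNorm (x 0) ≤ r →
      Filter.Tendsto x Filter.atTop (nhds 0)) ∧
    -- every sublevel set ℛ_γ ⊆ 𝒲 ∪ {0} is positively invariant with
    -- all solutions starting in it converging to 0:
    (∀ γ : ℝ, 0 < γ →
      (∀ x : Fin n → ℝ, V x ≤ γ →
        ellFun X₁ E Δ P₁ Ω G₁ G₂ Q x
          + gFun X₁ E Δ P₁ G₁ G₂ Q (δfun x) x < 0 ∨ x = 0) →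
      ∀ x : ℕ → Fin n → ℝ, (∀ t, x (t + 1) = f (x t)) → V (x 0) ≤ γ →
        (∀ t, V (x t) ≤ γ) ∧ Filter.Tendsto x Filter.atTop (nhds 0)) := by
  have hPinv := hP₁.inv
  have hPinvsymm : (P₁⁻¹).IsSymm := by simpa [IsHermitian, IsSymm] using hPinv.isHermitian
  obtain ⟨cV, hcV, hVlower⟩ := hPinv.exists_pos_mul_euclNorm_sq_le
  obtain ⟨c, hc, hclower⟩ := (hP₁.inv_mul_mul_inv hrob).exists_pos_mul_euclNorm_sq_le
  have hVnonneg (x : Fin n → ℝ) : 0 ≤ V x := by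
    rw [hV]
    exact (by positivity : 0 ≤ cV * euclNorm x ^ 2).trans (hVlower x)
  have hδ0 (hn : n ≠ 0) : δfun 0 = 0 := by
    have : NeZero n := ⟨hn⟩
    have hnorm : Tendsto (fun x : Fin n → ℝ => euclNorm x) (𝓝[≠] 0) (𝓝 0) := by
      have h := continuous_euclNorm.tendsto (0 : Fin n → ℝ)
      rw [euclNorm_eq_zero.2 rfl] at h
      exact h.mono_left nhdsWithin_le_nhds
    have hprod : Tendsto (fun x => δfun x / euclNorm x * euclNorm x) (𝓝[≠] 0) (𝓝 (0 * 0)) :=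
      hδlim.mul hnorm
    rw [zero_mul] at hprod
    refine tendsto_nhds_unique (hδcont.tendsto 0 |>.mono_left nhdsWithin_le_nhds)
      (hprod.congr' ?_)
    filter_upwards [self_mem_nhdsWithin] with x hx
    exact div_mul_cancel₀ _ (mt euclNorm_eq_zero.1 hx)
  have hf0 : f 0 = 0 := by
    rcases eq_or_ne n 0 with rfl | hn
    · exact Subsingleton.elim _ _
    have hd0 : d 0 = 0 :=
      euclNorm_eq_zero.1 (le_antisymm ((hd 0).trans_eq (hδ0 hn)) (euclNorm_nonneg _))
    simp [hf, hQ0, hd0]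
  have hstep (x : Fin n → ℝ)
      (hx : ellFun X₁ E Δ P₁ Ω G₁ G₂ Q x + gFun X₁ E Δ P₁ G₁ G₂ Q (δfun x) x < 0 ∨ x = 0) :
      V (f x) ≤ V x - c * euclNorm x ^ 2 := by
    rcases hx with hx | rfl
    · have hle := closedLoop_quadForm_le (X₁ := X₁) (E := E) (Ω := Ω) (G₁ := G₁) (G₂ := G₂)
        (Q := Q) hPinvsymm hD₀norm x (hd x)
      have hnom := nominal_quadForm_eq (W := Ω) hP₁ (X₁ - E * D₀) Y₁ x
      rw [← hG₁] at hnom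
      rw [hV, hV, hf, hΨ, hΞ]
      linarith [hclower x]
    · simp [hf0, euclNorm]
  have hinv : ∀ γ : ℝ, (∀ x : Fin n → ℝ, V x ≤ γ →
        ellFun X₁ E Δ P₁ Ω G₁ G₂ Q x + gFun X₁ E Δ P₁ G₁ G₂ Q (δfun x) x < 0 ∨ x = 0) →
      ∀ x : ℕ → Fin n → ℝ, (∀ t, x (t + 1) = f (x t)) → V (x 0) ≤ γ →
        (∀ t, V (x t) ≤ γ) ∧ Tendsto x atTop (𝓝 0) := by
    intro γ hγ x hx hx0
    have hmem (t : ℕ) : V (x t) ≤ γ := by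
      induction t with
      | zero => exact hx0
      | succ t ih =>
        rw [hx]
        exact (hstep _ (hγ _ ih)).trans ((sub_le_self _ (by positivity)).trans ih)
    refine ⟨hmem, tendsto_zero_of_quadratic_decrease hVnonneg hc fun t => ?_⟩
    rw [hx]
    exact hstep _ (hγ _ (hmem t))
  obtain ⟨r, hr, hneg⟩ : ∃ r > 0, ∀ x : Fin n → ℝ, euclNorm x < r →
      ellFun X₁ E Δ P₁ Ω G₁ G₂ Q x + gFun X₁ E Δ P₁ G₁ G₂ Q (δfun x) x < 0 ∨ x = 0 := by
    rcases eq_or_ne n 0 with rfl | hn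
    · exact ⟨1, one_pos, fun x _ => Or.inr (Subsingleton.elim _ _)⟩
    exact exists_ball_ellFun_add_gFun_neg (hP₁.inv_mul_mul_inv hΩ)
      (isLittleO_euclNorm_of_tendsto_div (by simp [hQ0, euclNorm]) hQlim)
      (isLittleO_euclNorm_of_tendsto_div (hδ0 hn) hδlim)
  have hsmall {ρ : ℝ} (hρ : 0 < ρ) {x : Fin n → ℝ} (hx : V x ≤ cV * (ρ / 2) ^ 2) :
      euclNorm x < ρ := by
    have hsq : euclNorm x ^ 2 ≤ (ρ / 2) ^ 2 :=
      le_of_mul_le_mul_left ((hVlower x).trans ((hV x).symm.trans_le hx)) hcV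
    linarith [abs_le_of_sq_le_sq' hsq (by positivity)]
  have hstart {γ : ℝ} (hγ : 0 < γ) : ∃ η > 0, ∀ x : Fin n → ℝ, euclNorm x ≤ η → V x ≤ γ := by
    have hcont : Tendsto (fun η : ℝ => spec2Norm P₁⁻¹ * η * η) (𝓝[>] 0) (𝓝 0) := by
      have : Continuous fun η : ℝ => spec2Norm P₁⁻¹ * η * η := by fun_prop
      simpa using (this.tendsto 0).mono_left nhdsWithin_le_nhds
    obtain ⟨η, hηγ, hη⟩ := ((hcont.eventually_lt_const hγ).and self_mem_nhdsWithin).exists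
    refine ⟨η, hη, fun x hx => ?_⟩
    rw [hV]
    refine (le_abs_self _).trans ((abs_dotProduct_mulVec_le _ _ _).trans (le_trans ?_ hηγ.le))
    have := spec2Norm_nonneg P₁⁻¹
    have := euclNorm_nonneg x
    gcongr
  refine ⟨hf0, fun ε hε => ?_, ?_, fun γ _ => hinv γ⟩
  · have hm : 0 < min r ε := lt_min hr hε
    obtain ⟨η, hη, hηV⟩ := hstart (by positivity : 0 < cV * (min r ε / 2) ^ 2)
    refine ⟨η, hη, fun x hx hx0 t => ?_⟩
    have hmem := (hinv _ (fun y hy => hneg y ((hsmall hm hy).trans_le (min_le_left _ _))) x hx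
      (hηV _ hx0)).1 t
    exact (hsmall hm hmem).le.trans (min_le_right _ _)
  · obtain ⟨η, hη, hηV⟩ := hstart (by positivity : 0 < cV * (r / 2) ^ 2)
    exact ⟨η, hη, fun x hx hx0 =>
      (hinv _ (fun y hy => hneg y (hsmall hr hy)) x hx (hηV _ hx0)).2⟩
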